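/- Let G be a connected graph of order n and let H be a graph that contains a connected component isomorphic to a complete graph. If n > 2·c(H) + 1 ≥ 5, then pd(G⊙H) ≥ c(H) + 2. -/

import Mathlib

/-!
Let `K` be a complete component of `H` of order `c` and let `P` be a resolving partition of
`G ⊙ H` with at most `c + 1` cells. The vertices of the copy `Kᵢ` of `K` at a vertex `i` of `G`
are twins, so they lie in `c` different cells. If `P` has only `c` cells, every vertex of every
`Kᵢ` is at distance `1` from all cells but its own, so vertices of two copies in the same cell are
not resolved. Hence `P` has `c + 1` cells and `Kᵢ` misses exactly one of them, `m i`.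

Let `e i` be the distance from the hub `i` to `m i`. A vertex of `Kᵢ` is at distance `e i + 1` from
`m i` and `1` from the other cells not containing it; the hub is at distance `e i` from `m i` and
`1` from the other cells not containing it. Resolvability has three consequences for `i ≠ j`:

* if `m i = m j`, then `e i ≠ e j` (compare vertices of `Kᵢ` and `Kⱼ` in a common cell);
* if `m i = m j`, then `e i ≠ e j + 1` (compare the hub `i` with the vertex of `Kⱼ` in its cell);
* if `m i ≠ m j`, then `e i` and `e j` are not both `0` (compare the hub `i`, which lies in `m i`,
  with the vertex of `Kⱼ` in `m i`).

If `e i ≥ 3`, the first step of a shortest path from `i` to `m i` leads to a hub `j` with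
`m j = m i` and `e i = e j + 1`, which is impossible; so `e i ≤ 2`. Therefore `e` vanishes at most
once and `m` is injective where `e` does not vanish, and `G` has at most `c + 2` vertices.
-/

open SimpleGraph

/-- The corona product `G ⊙ H`: one copy of `G`, one copy of `H` for each vertex of `G`,
with the `i`-th vertex of `G` joined to every vertex of the `i`-th copy of `H`. -/
def corona {α β : Type*} (G : SimpleGraph α) (H : SimpleGraph β) :
    SimpleGraph (α ⊕ α × β) :=
  SimpleGraph.fromRel (fun x y =>
    match x, y with
    | Sum.inl a, Sum.inl b => G.Adj a b
    | Sum.inl a, Sum.inr iu => a = iu.1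
    | Sum.inr iu, Sum.inr jw => iu.1 = jw.1 ∧ H.Adj iu.2 jw.2
    | _, _ => False)

/-- The distance from a vertex to a set of vertices: `d(v,A) = min_{u ∈ A} d(v,u)`. -/
noncomputable def setDist {α : Type*} (G : SimpleGraph α) (v : α) (A : Set α) : ℕ :=
  sInf (G.dist v '' A)

/-- `S` is a resolving set for `G`: distinct vertices have distinct metric representations. -/
def IsResolvingSet {α : Type*} (G : SimpleGraph α) (S : Set α) : Prop :=
  ∀ u v : α, (∀ w ∈ S, G.dist u w = G.dist v w) → u = v

/-- The metric dimension of `G`: minimum cardinality of a resolving set. -/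
noncomputable def metricDim {α : Type*} (G : SimpleGraph α) : ℕ :=
  sInf {k | ∃ S : Set α, IsResolvingSet G S ∧ S.ncard = k}

/-- A family of sets is a resolving partition for `G` if it is a partition of the vertex set
into nonempty cells and distinct vertices have distinct partition representations. -/
def IsResolvingPartition {α : Type*} (G : SimpleGraph α) (P : Set (Set α)) : Prop :=
  (∀ A ∈ P, A.Nonempty) ∧ (∀ v : α, ∃! A : Set α, A ∈ P ∧ v ∈ A) ∧
    ∀ u v : α, (∀ A ∈ P, setDist G u A = setDist G v A) → u = v

/-- The partition dimension of `G`: minimum number of cells in a resolving partition. -/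
noncomputable def partitionDim {α : Type*} (G : SimpleGraph α) : ℕ :=
  sInf {t | ∃ P : Set (Set α), IsResolvingPartition G P ∧ P.ncard = t}

/-- `c(H)`: the maximum cardinality of a connected component of `H` which is isomorphic to a
complete graph (i.e. whose vertex set is a clique). -/
noncomputable def maxCompleteComp {β : Type*} (H : SimpleGraph β) : ℕ :=
  sSup {k | ∃ C : H.ConnectedComponent, H.IsClique C.supp ∧ C.supp.ncard = k}

/-- `β(H)`: the number of isolated vertices of `H`. -/
noncomputable def numIsolated {β : Type*} (H : SimpleGraph β) : ℕ :=
  Set.ncard {v : β | ∀ u, ¬ H.Adj v u}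

/-- `α(H)`: the number of connected components of `H` of order greater than one. -/
noncomputable def numBigComp {β : Type*} (H : SimpleGraph β) : ℕ :=
  Set.ncard {C : H.ConnectedComponent | 1 < C.supp.ncard}

section SetDist

variable {α : Type*} {Γ : SimpleGraph α} {x y : α} {A K : Set α}

lemma setDist_le_dist (hy : y ∈ A) : setDist Γ x A ≤ Γ.dist x y :=
  Nat.sInf_le ⟨y, hy, rfl⟩

lemma exists_mem_dist_eq_setDist (x : α) (hA : A.Nonempty) :
    ∃ a ∈ A, Γ.dist x a = setDist Γ x A :=
  Nat.sInf_mem (hA.image (Γ.dist x))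

lemma setDist_eq_zero_of_mem (hx : x ∈ A) : setDist Γ x A = 0 := by
  simpa using setDist_le_dist (Γ := Γ) (x := x) hx

lemma setDist_eq_zero_iff (hΓ : Γ.Connected) (hA : A.Nonempty) :
    setDist Γ x A = 0 ↔ x ∈ A := by
  refine ⟨fun h => ?_, setDist_eq_zero_of_mem⟩
  obtain ⟨a, ha, hxa⟩ := exists_mem_dist_eq_setDist (Γ := Γ) x hA
  rw [h, hΓ.dist_eq_zero_iff] at hxa
  exact hxa ▸ ha

lemma setDist_le_setDist_add_one_of_adj (hΓ : Γ.Connected) (hA : A.Nonempty)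
    (hxy : Γ.Adj x y) : setDist Γ x A ≤ setDist Γ y A + 1 := by
  obtain ⟨a, ha, hya⟩ := exists_mem_dist_eq_setDist (Γ := Γ) y hA
  calc setDist Γ x A ≤ Γ.dist x a := setDist_le_dist ha
    _ ≤ Γ.dist x y + Γ.dist y a := hΓ.dist_triangle
    _ = setDist Γ y A + 1 := by rw [dist_eq_one_iff_adj.mpr hxy, hya, add_comm]

lemma setDist_le_one_of_adj (hxy : Γ.Adj x y) (hy : y ∈ A) : setDist Γ x A ≤ 1 :=
  (setDist_le_dist hy).trans_eq (dist_eq_one_iff_adj.mpr hxy)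

lemma setDist_eq_one_of_forall_adj (hΓ : Γ.Connected) (hK : ∀ ⦃y⦄, y ∈ K → x ≠ y → Γ.Adj x y)
    (hKA : (K ∩ A).Nonempty) (hx : x ∉ A) : setDist Γ x A = 1 := by
  obtain ⟨y, hyK, hyA⟩ := hKA
  have hxy : Γ.Adj x y := hK hyK fun h => hx (h ▸ hyA)
  have hpos : setDist Γ x A ≠ 0 := (setDist_eq_zero_iff hΓ ⟨y, hyA⟩).not.mpr hx
  exact le_antisymm (setDist_le_one_of_adj hxy hyA) (Nat.one_le_iff_ne_zero.mpr hpos)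

lemma exists_adj_setDist_eq (hΓ : Γ.Connected) (hA : A.Nonempty) {k : ℕ}
    (hx : setDist Γ x A = k + 1) : ∃ y, Γ.Adj x y ∧ setDist Γ y A = k := by
  obtain ⟨a, ha, hxa⟩ := exists_mem_dist_eq_setDist (Γ := Γ) x hA
  obtain ⟨p, hp⟩ := hΓ.exists_walk_length_eq_dist x a
  cases p with
  | nil => simp only [Walk.length_nil] at hp; omega
  | @cons _ y _ hxy q =>
    have hya : setDist Γ y A ≤ q.length := (setDist_le_dist ha).trans (dist_le q)
    have hle := setDist_le_setDist_add_one_of_adj hΓ hA hxy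
    rw [Walk.length_cons] at hp
    exact ⟨y, hxy, by omega⟩

end SetDist

section Twins

variable {α : Type*} {Γ : SimpleGraph α} {x y : α} {A : Set α}

/-- Twin vertices: they have the same neighbours apart from themselves. Both true twins (adjacent)
and false twins (not adjacent) are allowed. -/
def AreTwins (Γ : SimpleGraph α) (x y : α) : Prop :=
  ∀ z, z ≠ x → z ≠ y → (Γ.Adj x z ↔ Γ.Adj y z)

lemma AreTwins.symm (h : AreTwins Γ x y) : AreTwins Γ y x :=
  fun z hzy hzx => (h z hzx hzy).symm

lemma AreTwins.setDist_le (hΓ : Γ.Connected) (h : AreTwins Γ x y) (hA : A.Nonempty)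
    (hx : x ∉ A) : setDist Γ y A ≤ setDist Γ x A := by
  obtain ⟨k, hk⟩ :=
    Nat.exists_eq_succ_of_ne_zero ((setDist_eq_zero_iff (Γ := Γ) hΓ hA).not.mpr hx)
  obtain ⟨z, hxz, hz⟩ := exists_adj_setDist_eq hΓ hA hk
  obtain rfl | hzy := eq_or_ne z y
  · omega
  · have := setDist_le_setDist_add_one_of_adj hΓ hA ((h z hxz.ne' hzy).mp hxz)
    omega

lemma AreTwins.setDist_eq (hΓ : Γ.Connected) (h : AreTwins Γ x y) (hA : A.Nonempty)
    (hx : x ∉ A) (hy : y ∉ A) : setDist Γ x A = setDist Γ y A :=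
  le_antisymm (h.symm.setDist_le hΓ hA hy) (h.setDist_le hΓ hA hx)

end Twins

section Pendant

variable {α : Type*} {Γ : SimpleGraph α} {v x : α} {A K : Set α}

/-- `K` hangs at the hub `v`: `v` is adjacent to all of `K`, and `K` can be left only through
`v`. In a corona product these are the copies of unions of components of the second factor. -/
structure IsPendant (Γ : SimpleGraph α) (v : α) (K : Set α) : Prop where
  adj : ∀ x ∈ K, Γ.Adj v x
  eq_or_mem_of_adj : ∀ x ∈ K, ∀ z, Γ.Adj x z → z = v ∨ z ∈ K

lemma IsPendant.setDist_hub_lt (hΓ : Γ.Connected) (hK : IsPendant Γ v K) (hA : A.Nonempty)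
    (hKA : Disjoint K A) (hx : x ∈ K) : setDist Γ v A < setDist Γ x A := by
  induction hk : setDist Γ x A generalizing x with
  | zero => exact absurd ((setDist_eq_zero_iff hΓ hA).mp hk) (hKA.notMem_of_mem_left hx)
  | succ k ih =>
    obtain ⟨z, hxz, hz⟩ := exists_adj_setDist_eq hΓ hA hk
    obtain rfl | hzK := hK.eq_or_mem_of_adj x hx z hxz
    · omega
    · exact (ih hzK hz).trans k.lt_succ_self

lemma IsPendant.setDist_eq_add_one (hΓ : Γ.Connected) (hK : IsPendant Γ v K) (hA : A.Nonempty)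
    (hKA : Disjoint K A) (hx : x ∈ K) : setDist Γ x A = setDist Γ v A + 1 :=
  le_antisymm (setDist_le_setDist_add_one_of_adj hΓ hA (hK.adj x hx).symm)
    (hK.setDist_hub_lt hΓ hA hKA hx)

lemma IsPendant.pairwise_areTwins (hK : IsPendant Γ v K) (hclique : Γ.IsClique K) :
    K.Pairwise (AreTwins Γ) := by
  have adj_of_adj : ∀ {x y z}, x ∈ K → y ∈ K → z ≠ y → Γ.Adj x z → Γ.Adj y z := by
    intro x y z hx hy hzy hxz
    obtain rfl | hz := hK.eq_or_mem_of_adj x hx z hxz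
    · exact (hK.adj y hy).symm
    · exact hclique hy hz hzy.symm
  exact fun x hx y hy _ z hzx hzy => ⟨adj_of_adj hx hy hzy, adj_of_adj hy hx hzx⟩

end Pendant

/-- `M` is the only cell of the partition `P` that the vertex set `K` misses. -/
structure IsUniqueMissedCell {α : Type*} (P : Set (Set α)) (K M : Set α) : Prop where
  mem : M ∈ P
  disjoint : Disjoint K M
  inter_nonempty : ∀ B ∈ P, B ≠ M → (K ∩ B).Nonempty

namespace IsResolvingPartition

variable {α : Type*} {Γ : SimpleGraph α} {P : Set (Set α)} {x y v v' : α} {A B K K' M M' : Set α}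

lemma singletons (hΓ : Γ.Connected) :
    IsResolvingPartition Γ (Set.range fun x : α => ({x} : Set α)) := by
  refine ⟨?_, fun v => ⟨{v}, ⟨⟨v, rfl⟩, rfl⟩, ?_⟩, fun u v h => ?_⟩
  · rintro _ ⟨x, rfl⟩
    exact Set.singleton_nonempty x
  · rintro _ ⟨⟨x, rfl⟩, hvx⟩
    rw [Set.mem_singleton_iff.mp hvx]
  · have hvu := (h {u} ⟨u, rfl⟩).symm.trans (setDist_eq_zero_of_mem (Set.mem_singleton u))
    exact ((setDist_eq_zero_iff hΓ (Set.singleton_nonempty u)).mp hvu).symm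

lemma exists_ncard_eq_partitionDim (hΓ : Γ.Connected) :
    ∃ P, IsResolvingPartition Γ P ∧ P.ncard = partitionDim Γ :=
  Nat.sInf_mem (s := {t | ∃ P : Set (Set α), IsResolvingPartition Γ P ∧ P.ncard = t})
    ⟨_, _, singletons hΓ, rfl⟩

lemma nonempty_of_mem (hP : IsResolvingPartition Γ P) (hA : A ∈ P) : A.Nonempty :=
  hP.1 A hA

lemma exists_cell (hP : IsResolvingPartition Γ P) (x : α) : ∃ A ∈ P, x ∈ A :=
  (hP.2.1 x).exists

lemma cell_unique (hP : IsResolvingPartition Γ P) (hA : A ∈ P) (hB : B ∈ P) (hxA : x ∈ A)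
    (hxB : x ∈ B) : A = B :=
  (hP.2.1 x).unique ⟨hA, hxA⟩ ⟨hB, hxB⟩

lemma eq_of_mem_of_setDist_eq (hP : IsResolvingPartition Γ P) (hA : A ∈ P) (hx : x ∈ A)
    (hy : y ∈ A) (h : ∀ B ∈ P, x ∉ B → y ∉ B → setDist Γ x B = setDist Γ y B) : x = y := by
  refine hP.2.2 x y fun B hB => ?_
  obtain rfl | hBA := eq_or_ne B A
  · rw [setDist_eq_zero_of_mem hx, setDist_eq_zero_of_mem hy]
  · exact h B hB (fun hxB => hBA (hP.cell_unique hB hA hxB hx))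
      fun hyB => hBA (hP.cell_unique hB hA hyB hy)

lemma eq_of_areTwins (hΓ : Γ.Connected) (hP : IsResolvingPartition Γ P) (hA : A ∈ P)
    (hx : x ∈ A) (hy : y ∈ A) (h : AreTwins Γ x y) : x = y :=
  hP.eq_of_mem_of_setDist_eq hA hx hy fun _ hB hxB hyB =>
    h.setDist_eq hΓ (hP.nonempty_of_mem hB) hxB hyB

lemma ncard_cells_meeting (hΓ : Γ.Connected) (hP : IsResolvingPartition Γ P)
    (hK : K.Pairwise (AreTwins Γ)) : {B ∈ P | (K ∩ B).Nonempty}.ncard = K.ncard := by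
  choose cell hcellP hcell using hP.exists_cell
  have himage : {B ∈ P | (K ∩ B).Nonempty} = cell '' K := by
    ext B
    constructor
    · rintro ⟨hB, x, hxK, hxB⟩
      exact ⟨x, hxK, hP.cell_unique (hcellP x) hB (hcell x) hxB⟩
    · rintro ⟨x, hxK, rfl⟩
      exact ⟨hcellP x, x, hxK, hcell x⟩
  have hinj : K.InjOn cell := by
    intro x hx y hy hxy
    by_contra hne
    exact hne (hP.eq_of_areTwins hΓ (hcellP x) (hcell x) (hxy ▸ hcell y) (hK hx hy hne))
  rw [himage, hinj.ncard_image]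

lemma inter_nonempty_of_ncard_le (hΓ : Γ.Connected) (hP : IsResolvingPartition Γ P)
    (hfin : P.Finite) (hK : K.Pairwise (AreTwins Γ)) (hcard : P.ncard ≤ K.ncard) (hB : B ∈ P) :
    (K ∩ B).Nonempty := by
  have heq : {B ∈ P | (K ∩ B).Nonempty} = P :=
    Set.eq_of_subset_of_ncard_le (Set.sep_subset _ _)
      (hcard.trans_eq (hP.ncard_cells_meeting hΓ hK).symm) hfin
  exact (heq.symm.subset hB).2

lemma exists_isUniqueMissedCell (hΓ : Γ.Connected) (hP : IsResolvingPartition Γ P)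
    (hK : K.Pairwise (AreTwins Γ)) (hcard : P.ncard = K.ncard + 1) :
    ∃ M, IsUniqueMissedCell P K M := by
  have hfin : P.Finite := Set.finite_of_ncard_pos (by omega)
  have hone : (P \ {B ∈ P | (K ∩ B).Nonempty}).ncard = 1 := by
    have := Set.ncard_sdiff_add_ncard_of_subset (Set.sep_subset P fun B => (K ∩ B).Nonempty) hfin
    have := hP.ncard_cells_meeting hΓ hK
    omega
  obtain ⟨M, hM⟩ := Set.ncard_eq_one.mp hone
  have hmissed : ∀ B ∈ P, ¬(K ∩ B).Nonempty ↔ B = M := fun B hB => by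
    rw [← Set.mem_singleton_iff, ← hM]
    exact ⟨fun h => ⟨hB, fun h' => h h'.2⟩, fun h h' => h.2 ⟨hB, h'⟩⟩
  have hMP : M ∈ P := (hM.symm.subset rfl).1
  refine ⟨M, hMP, ?_, fun B hB hBM => not_not.mp ((hmissed B hB).not.mpr hBM)⟩
  rw [Set.disjoint_iff_inter_eq_empty, ← Set.not_nonempty_iff_eq_empty]
  exact (hmissed M hMP).mpr rfl

lemma inter_nonempty_of_isClique (hΓ : Γ.Connected) (hP : IsResolvingPartition Γ P)
    (hP₀ : P.Nonempty) (hK : Γ.IsClique K) (hK' : Γ.IsClique K')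
    (hmeet : ∀ B ∈ P, (K ∩ B).Nonempty) (hmeet' : ∀ B ∈ P, (K' ∩ B).Nonempty) :
    (K ∩ K').Nonempty := by
  obtain ⟨A, hA⟩ := hP₀
  obtain ⟨x, hxK, hxA⟩ := hmeet A hA
  obtain ⟨y, hyK', hyA⟩ := hmeet' A hA
  have hxy : x = y := hP.eq_of_mem_of_setDist_eq hA hxA hyA fun B hB hxB hyB => by
    rw [setDist_eq_one_of_forall_adj hΓ (hK hxK) (hmeet B hB) hxB,
      setDist_eq_one_of_forall_adj hΓ (hK' hyK') (hmeet' B hB) hyB]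
  exact ⟨x, hxK, hxy ▸ hyK'⟩

lemma inter_nonempty_of_setDist_hub_eq (hΓ : Γ.Connected) (hP : IsResolvingPartition Γ P)
    (hK : IsPendant Γ v K) (hKc : Γ.IsClique K) (hM : IsUniqueMissedCell P K M)
    (hK' : IsPendant Γ v' K') (hKc' : Γ.IsClique K') (hM' : IsUniqueMissedCell P K' M)
    (hK₀ : K.Nonempty) (h : setDist Γ v M = setDist Γ v' M) : (K ∩ K').Nonempty := by
  obtain ⟨x, hxK⟩ := hK₀
  obtain ⟨A, hA, hxA⟩ := hP.exists_cell x
  have hAM : A ≠ M := fun hAM => hM.disjoint.notMem_of_mem_left hxK (hAM ▸ hxA)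
  obtain ⟨y, hyK', hyA⟩ := hM'.inter_nonempty A hA hAM
  have hxy : x = y := hP.eq_of_mem_of_setDist_eq hA hxA hyA fun B hB hxB hyB => by
    obtain rfl | hBM := eq_or_ne B M
    · have hB₀ := hP.nonempty_of_mem hB
      rw [hK.setDist_eq_add_one hΓ hB₀ hM.disjoint hxK,
        hK'.setDist_eq_add_one hΓ hB₀ hM'.disjoint hyK', h]
    · rw [setDist_eq_one_of_forall_adj hΓ (hKc hxK) (hM.inter_nonempty B hB hBM) hxB,
        setDist_eq_one_of_forall_adj hΓ (hKc' hyK') (hM'.inter_nonempty B hB hBM) hyB]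
  exact ⟨x, hxK, hxy ▸ hyK'⟩

lemma hub_mem_of_setDist_hub_eq_add_one (hΓ : Γ.Connected) (hP : IsResolvingPartition Γ P)
    (hK : IsPendant Γ v K) (hM : IsUniqueMissedCell P K M)
    (hK' : IsPendant Γ v' K') (hKc' : Γ.IsClique K') (hM' : IsUniqueMissedCell P K' M)
    (h : setDist Γ v M = setDist Γ v' M + 1) : v ∈ K' := by
  obtain ⟨A, hA, hvA⟩ := hP.exists_cell v
  have hAM : A ≠ M := by
    rintro rfl
    rw [setDist_eq_zero_of_mem hvA] at h
    omega
  obtain ⟨y, hyK', hyA⟩ := hM'.inter_nonempty A hA hAM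
  have hvy : v = y := hP.eq_of_mem_of_setDist_eq hA hvA hyA fun B hB hvB hyB => by
    obtain rfl | hBM := eq_or_ne B M
    · rw [h, hK'.setDist_eq_add_one hΓ (hP.nonempty_of_mem hB) hM'.disjoint hyK']
    · rw [setDist_eq_one_of_forall_adj hΓ (fun z hz _ => hK.adj z hz)
          (hM.inter_nonempty B hB hBM) hvB,
        setDist_eq_one_of_forall_adj hΓ (hKc' hyK') (hM'.inter_nonempty B hB hBM) hyB]
  exact hvy ▸ hyK'

lemma hub_mem_of_hubs_mem_missedCells (hΓ : Γ.Connected) (hP : IsResolvingPartition Γ P)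
    (hK : IsPendant Γ v K) (hM : IsUniqueMissedCell P K M)
    (hK' : IsPendant Γ v' K') (hKc' : Γ.IsClique K') (hM' : IsUniqueMissedCell P K' M')
    (hMM' : M ≠ M') (hv : v ∈ M) (hv' : v' ∈ M') : v ∈ K' := by
  obtain ⟨y, hyK', hyM⟩ := hM'.inter_nonempty M hM.mem hMM'
  have hvy : v = y := hP.eq_of_mem_of_setDist_eq hM.mem hv hyM fun B hB hvB hyB => by
    have hBM : B ≠ M := fun hBM => hvB (hBM ▸ hv)
    rw [setDist_eq_one_of_forall_adj hΓ (fun z hz _ => hK.adj z hz)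
      (hM.inter_nonempty B hB hBM) hvB]
    obtain rfl | hBM' := eq_or_ne B M'
    · rw [hK'.setDist_eq_add_one hΓ ⟨v', hv'⟩ hM'.disjoint hyK', setDist_eq_zero_of_mem hv']
    · rw [setDist_eq_one_of_forall_adj hΓ (hKc' hyK') (hM'.inter_nonempty B hB hBM') hyB]
  exact hvy ▸ hyK'

end IsResolvingPartition

section Corona

variable {V W : Type*} {G : SimpleGraph V} {H : SimpleGraph W}

lemma corona_adj_inl_inl {a b : V} : (corona G H).Adj (.inl a) (.inl b) ↔ G.Adj a b := by
  simpa [corona, fromRel_adj, G.adj_comm b a] using Adj.ne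

lemma corona_adj_inl_inr {a i : V} {w : W} :
    (corona G H).Adj (.inl a) (.inr (i, w)) ↔ a = i := by
  simp [corona, fromRel_adj]

lemma corona_adj_inr_inl {a i : V} {w : W} :
    (corona G H).Adj (.inr (i, w)) (.inl a) ↔ a = i := by
  rw [adj_comm, corona_adj_inl_inr]

lemma corona_adj_inr_inr {i j : V} {w u : W} :
    (corona G H).Adj (.inr (i, w)) (.inr (j, u)) ↔ i = j ∧ H.Adj w u := by
  simp only [corona, fromRel_adj, ne_eq, Sum.inr.injEq, Prod.mk.injEq]
  constructor
  · rintro ⟨-, ⟨hij, hwu⟩ | ⟨hji, huw⟩⟩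
    exacts [⟨hij, hwu⟩, ⟨hji.symm, huw.symm⟩]
  · exact fun h => ⟨fun h' => h.2.ne h'.2, .inl h⟩

lemma corona_connected (hG : G.Connected) : (corona G H).Connected := by
  let inlHom : G →g corona G H := ⟨Sum.inl, corona_adj_inl_inl.mpr⟩
  obtain ⟨v₀⟩ := hG.nonempty
  refine (connected_iff_exists_forall_reachable _).mpr ⟨.inl v₀, ?_⟩
  have hub : ∀ a, (corona G H).Reachable (.inl v₀) (.inl a) :=
    fun a => (hG.preconnected v₀ a).map inlHom
  rintro (a | ⟨i, w⟩)
  · exact hub a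
  · exact (hub i).trans (corona_adj_inl_inr.mpr rfl).reachable

/-- The copy at the vertex `i` of `G` of a vertex set `S` of `H`, inside `G ⊙ H`. -/
def coronaCopy (i : V) (S : Set W) : Set (V ⊕ V × W) :=
  (fun w => .inr (i, w)) '' S

lemma inl_notMem_coronaCopy {a i : V} {S : Set W} : .inl a ∉ coronaCopy i S := by
  rintro ⟨w, -, ⟨⟩⟩

lemma eq_of_inter_coronaCopy_nonempty {i j : V} {S T : Set W}
    (h : (coronaCopy i S ∩ coronaCopy j T).Nonempty) : i = j := by
  obtain ⟨_, ⟨w, -, rfl⟩, ⟨u, -, huw⟩⟩ := h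
  exact congrArg Prod.fst (Sum.inr_injective huw).symm

lemma ncard_coronaCopy (i : V) (S : Set W) : (coronaCopy i S).ncard = S.ncard :=
  Set.ncard_image_of_injective S (Sum.inr_injective.comp (Prod.mk_right_injective i))

lemma isClique_coronaCopy {S : Set W} (hS : H.IsClique S) (i : V) :
    (corona G H).IsClique (coronaCopy i S) := by
  rintro _ ⟨w, hw, rfl⟩ _ ⟨u, hu, rfl⟩ hne
  exact corona_adj_inr_inr.mpr ⟨rfl, hS hw hu fun h => hne (h ▸ rfl)⟩

lemma isPendant_coronaCopy {S : Set W} (hS : ∀ w ∈ S, ∀ u, H.Adj w u → u ∈ S) (i : V) :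
    IsPendant (corona G H) (.inl i) (coronaCopy i S) where
  adj := by
    rintro _ ⟨w, -, rfl⟩
    exact corona_adj_inl_inr.mpr rfl
  eq_or_mem_of_adj := by
    rintro _ ⟨w, hw, rfl⟩ (a | ⟨j, u⟩) h
    · exact .inl (congrArg _ (corona_adj_inr_inl.mp h))
    · obtain ⟨rfl, hwu⟩ := corona_adj_inr_inr.mp h
      exact .inr ⟨u, hS w hw u hwu, rfl⟩

lemma isPendant_coronaCopy_supp (C : H.ConnectedComponent) (i : V) :
    IsPendant (corona G H) (.inl i) (coronaCopy i C.supp) :=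
  isPendant_coronaCopy (fun _ hw _ => C.mem_supp_of_adj_mem_supp hw) i

lemma setDist_inl_le_one {i : V} {S : Set W} {A : Set (V ⊕ V × W)}
    (h : (coronaCopy i S ∩ A).Nonempty) : setDist (corona G H) (.inl i) A ≤ 1 := by
  obtain ⟨_, ⟨w, -, rfl⟩, hwA⟩ := h
  exact setDist_le_one_of_adj (corona_adj_inl_inr.mpr rfl) hwA

lemma exists_adj_setDist_inl_eq (hG : G.Connected) {i : V} {A : Set (V ⊕ V × W)}
    (hA : A.Nonempty) {k : ℕ} (h : setDist (corona G H) (.inl i) A = k + 2) :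
    ∃ j, G.Adj i j ∧ setDist (corona G H) (.inl j) A = k + 1 := by
  have hΓ : (corona G H).Connected := corona_connected hG
  obtain ⟨j | ⟨j, u⟩, hadj, hk⟩ := exists_adj_setDist_eq hΓ hA h
  · exact ⟨j, corona_adj_inl_inl.mp hadj, hk⟩
  · obtain rfl := corona_adj_inl_inr.mp hadj
    have hdisj : Disjoint (coronaCopy i Set.univ) A := by
      by_contra hmeet
      have := setDist_inl_le_one (G := G) (H := H) (Set.not_disjoint_iff_nonempty_inter.mp hmeet)
      omega
    have hcopy : IsPendant (corona G H) (.inl i) (coronaCopy i Set.univ) :=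
      isPendant_coronaCopy (fun _ _ _ _ => Set.mem_univ _) i
    have hlt := hcopy.setDist_hub_lt hΓ hA hdisj (Set.mem_image_of_mem _ (Set.mem_univ u))
    rw [h, hk] at hlt
    omega

end Corona

namespace IsResolvingPartition

variable {V W : Type*} {G : SimpleGraph V} {H : SimpleGraph W} {C : H.ConnectedComponent}
  {P : Set (Set (V ⊕ V × W))} {m : V → Set (V ⊕ V × W)}

lemma setDist_inl_missedCell_le_two (hG : G.Connected) (hP : IsResolvingPartition (corona G H) P)
    (hC : H.IsClique C.supp) (hm : ∀ i, IsUniqueMissedCell P (coronaCopy i C.supp) (m i)) (i : V) :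
    setDist (corona G H) (.inl i) (m i) ≤ 2 := by
  by_contra! hgt
  obtain ⟨k, hk⟩ := Nat.exists_eq_add_of_le' hgt
  obtain ⟨j, -, hj⟩ :=
    exists_adj_setDist_inl_eq hG (hP.nonempty_of_mem (hm i).mem) (k := k + 1) hk
  have hmij : m i = m j := by
    by_contra hne
    have := setDist_inl_le_one (G := G) (H := H) ((hm j).inter_nonempty _ (hm i).mem hne)
    omega
  exact inl_notMem_coronaCopy <| hP.hub_mem_of_setDist_hub_eq_add_one (corona_connected hG)
    (isPendant_coronaCopy_supp C i) (hm i) (isPendant_coronaCopy_supp C j)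
    (isClique_coronaCopy hC j) (hmij ▸ hm j) (by omega)

lemma eq_of_missedCell_eq_of_setDist_eq (hG : G.Connected)
    (hP : IsResolvingPartition (corona G H) P) (hC : H.IsClique C.supp)
    (hm : ∀ i, IsUniqueMissedCell P (coronaCopy i C.supp) (m i)) {i j : V} (hij : m i = m j)
    (h : setDist (corona G H) (.inl i) (m i) = setDist (corona G H) (.inl j) (m j)) : i = j :=
  eq_of_inter_coronaCopy_nonempty <| hP.inter_nonempty_of_setDist_hub_eq (corona_connected hG)
    (isPendant_coronaCopy_supp C i) (isClique_coronaCopy hC i) (hm i)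
    (isPendant_coronaCopy_supp C j) (isClique_coronaCopy hC j) (hij ▸ hm j)
    (C.nonempty_supp.image _) (h.trans (by rw [hij]))

lemma eq_of_inl_mem_missedCell (hG : G.Connected) (hP : IsResolvingPartition (corona G H) P)
    (hC : H.IsClique C.supp) (hm : ∀ i, IsUniqueMissedCell P (coronaCopy i C.supp) (m i)) {i j : V}
    (hi : .inl i ∈ m i) (hj : .inl j ∈ m j) : i = j := by
  by_cases hij : m i = m j
  · exact hP.eq_of_missedCell_eq_of_setDist_eq hG hC hm hij
      (by rw [setDist_eq_zero_of_mem hi, setDist_eq_zero_of_mem hj])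
  · exact absurd (hP.hub_mem_of_hubs_mem_missedCells (corona_connected hG)
      (isPendant_coronaCopy_supp C i) (hm i) (isPendant_coronaCopy_supp C j)
      (isClique_coronaCopy hC j) (hm j) hij hi hj) inl_notMem_coronaCopy

lemma injOn_missedCell (hG : G.Connected) (hP : IsResolvingPartition (corona G H) P)
    (hC : H.IsClique C.supp) (hm : ∀ i, IsUniqueMissedCell P (coronaCopy i C.supp) (m i)) :
    Set.InjOn m {i | .inl i ∉ m i} := by
  have hΓ : (corona G H).Connected := corona_connected hG
  have hpos : ∀ {i}, .inl i ∉ m i → setDist (corona G H) (.inl i) (m i) ≠ 0 := fun {i} =>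
    (setDist_eq_zero_iff hΓ (hP.nonempty_of_mem (hm i).mem)).not.mpr
  have hne : ∀ {i j}, m i = m j →
      setDist (corona G H) (.inl i) (m i) ≠ setDist (corona G H) (.inl j) (m j) + 1 :=
    fun {i j} hij h => inl_notMem_coronaCopy <| hP.hub_mem_of_setDist_hub_eq_add_one hΓ
      (isPendant_coronaCopy_supp C i) (hm i) (isPendant_coronaCopy_supp C j)
      (isClique_coronaCopy hC j) (hij ▸ hm j) (h.trans (by rw [hij]))
  intro i hi j hj hij
  refine hP.eq_of_missedCell_eq_of_setDist_eq hG hC hm hij ?_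
  have := hP.setDist_inl_missedCell_le_two hG hC hm i
  have := hP.setDist_inl_missedCell_le_two hG hC hm j
  have := hpos hi
  have := hpos hj
  have := hne hij
  have := hne hij.symm
  omega

lemma card_le_of_isUniqueMissedCell (hG : G.Connected) (hP : IsResolvingPartition (corona G H) P)
    (hC : H.IsClique C.supp) (hm : ∀ i, IsUniqueMissedCell P (coronaCopy i C.supp) (m i)) :
    ENat.card V ≤ P.encard + 1 := by
  have hzero : {i | .inl i ∈ m i}.encard ≤ 1 :=
    Set.encard_le_one_iff.mpr fun i j hi hj => hP.eq_of_inl_mem_missedCell hG hC hm hi hj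
  have hpos : {i | .inl i ∉ m i}.encard ≤ P.encard :=
    Set.encard_le_encard_of_injOn (fun i _ => (hm i).mem) (hP.injOn_missedCell hG hC hm)
  calc ENat.card V = {i | .inl i ∈ m i}.encard + {i | .inl i ∉ m i}.encard := by
        rw [← Set.encard_univ, ← Set.encard_add_encard_compl {i | .inl i ∈ m i}]; rfl
    _ ≤ 1 + P.encard := add_le_add hzero hpos
    _ = P.encard + 1 := add_comm _ _

lemma ncard_supp_lt_ncard [Nontrivial V] (hG : G.Connected)
    (hP : IsResolvingPartition (corona G H) P) (hfin : P.Finite) (hC : H.IsClique C.supp) :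
    C.supp.ncard < P.ncard := by
  by_contra! hle
  have hΓ : (corona G H).Connected := corona_connected hG
  obtain ⟨i, j, hij⟩ := exists_pair_ne V
  obtain ⟨A, hA, -⟩ := hP.exists_cell (.inl i)
  have hmeet : ∀ a, ∀ B ∈ P, (coronaCopy a C.supp ∩ B).Nonempty := fun a _ =>
    hP.inter_nonempty_of_ncard_le hΓ hfin
      ((isPendant_coronaCopy_supp C a).pairwise_areTwins (isClique_coronaCopy hC a))
      (hle.trans_eq (ncard_coronaCopy a C.supp).symm)
  exact hij <| eq_of_inter_coronaCopy_nonempty <| hP.inter_nonempty_of_isClique hΓ ⟨A, hA⟩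
    (isClique_coronaCopy hC i) (isClique_coronaCopy hC j) (hmeet i) (hmeet j)

lemma ncard_supp_add_two_le_ncard (hG : G.Connected) (hP : IsResolvingPartition (corona G H) P)
    (hfin : P.Finite) (hC : H.IsClique C.supp) (hV : C.supp.ncard + 2 < ENat.card V) :
    C.supp.ncard + 2 ≤ P.ncard := by
  have : Nontrivial V :=
    (ENat.one_lt_card_iff_nontrivial V).mp (lt_of_le_of_lt (by norm_cast; omega) hV)
  have hlt := hP.ncard_supp_lt_ncard hG hfin hC
  by_contra! hgt
  have hcard : P.ncard = C.supp.ncard + 1 := by omega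
  choose m hm using fun i => hP.exists_isUniqueMissedCell (corona_connected hG)
    ((isPendant_coronaCopy_supp C i).pairwise_areTwins (isClique_coronaCopy hC i))
    (hcard.trans (by rw [ncard_coronaCopy]))
  have hle := hP.card_le_of_isUniqueMissedCell hG hC hm
  rw [← hfin.cast_ncard_eq, hcard] at hle
  exact absurd hV (not_lt.mpr (by exact_mod_cast hle))

end IsResolvingPartition

lemma exists_ncard_supp_eq_maxCompleteComp {W : Type*} [Finite W] {H : SimpleGraph W}
    (hcomp : ∃ C : H.ConnectedComponent, H.IsClique C.supp) :
    ∃ C : H.ConnectedComponent, H.IsClique C.supp ∧ C.supp.ncard = maxCompleteComp H := by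
  obtain ⟨C, hC⟩ := hcomp
  refine Nat.sSup_mem (s := {k | ∃ C : H.ConnectedComponent, H.IsClique C.supp ∧ C.supp.ncard = k})
    ⟨_, C, hC, rfl⟩ ⟨Nat.card W, ?_⟩
  rintro _ ⟨C, -, rfl⟩
  exact Set.ncard_le_card _

theorem stmt9_general {V W : Type*} [Finite V] [Finite W] (G : SimpleGraph V) (H : SimpleGraph W)
    (hG : G.Connected) (hcomp : ∃ C : H.ConnectedComponent, H.IsClique C.supp)
    (hV : maxCompleteComp H + 2 < Nat.card V) :
    maxCompleteComp H + 2 ≤ partitionDim (corona G H) := by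
  obtain ⟨C, hC, hcard⟩ := exists_ncard_supp_eq_maxCompleteComp hcomp
  obtain ⟨P, hP, hPdim⟩ :=
    IsResolvingPartition.exists_ncard_eq_partitionDim (corona_connected (H := H) hG)
  rw [← hcard] at hV ⊢
  rw [← hPdim]
  refine hP.ncard_supp_add_two_le_ncard hG P.toFinite hC ?_
  rw [ENat.card_eq_coe_natCard]
  exact_mod_cast hV

/-- Let `G` be a connected graph of order `n` and let `H` be a graph containing a
connected component isomorphic to a complete graph, with `c(H)` the maximum cardinality of such
a component. If `n > 2·c(H) + 1 ≥ 5`, then `pd(G⊙H) ≥ c(H) + 2`. -/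
theorem stmt9 {V W : Type*} [Fintype V] [Fintype W] (G : SimpleGraph V) (H : SimpleGraph W)
    (hG : G.Connected) (n : ℕ) (hn : Fintype.card V = n)
    (hcomp : ∃ C : H.ConnectedComponent, H.IsClique C.supp)
    (h₁ : n > 2 * maxCompleteComp H + 1) (h₂ : 2 * maxCompleteComp H + 1 ≥ 5) :
    partitionDim (corona G H) ≥ maxCompleteComp H + 2 :=
  stmt9_general G H hG hcomp (by rw [Nat.card_eq_fintype_card]; omega)
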